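/- Let F_1, …, F_k ∈ ℝ^{n×n} be real symmetric, V ∈ ℝ^{n×p} with p ≤ n, Λ = diag(λ̂_1, …, λ̂_p) real diagonal, and assume f_j(λ̂_i) ∈ ℝ for all i, j. Let Q ∈ ℝ^{n×n} be orthogonal with V = Q [T; 0_{(n−p)×p}] (a QR factorization of V), set T̃_j = T f_j(Λ), T̃ = [T̃_1; …; T̃_k] ∈ ℝ^{kp×p}, R = Σ_{j=1}^k F_j V f_j(Λ), and partition −Q^T R = [B_1; B_2] with B_1 ∈ ℝ^{p×p} and B_2 ∈ ℝ^{(n−p)×p}. Define [A_{21}^{(1)}, …, A_{21}^{(k)}] = B_2 T̃†. Then there exist real symmetric matrices A_{11}^{(j)} = (A_{11}^{(j)})^T ∈ ℝ^{p×p} with Σ_{j=1}^k A_{11}^{(j)} T̃_j = B_1 and Σ_{j=1}^k A_{21}^{(j)} T̃_j = B_2, and the matrices δF_j := Q [[A_{11}^{(j)}, (A_{21}^{(j)})^T]; [A_{21}^{(j)}, 0_{(n−p)×(n−p)}]] Q^T are real symmetric and satisfy Σ_{j=1}^k (F_j + δF_j) V f_j(Λ) = 0. -/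

import Mathlib

open Matrix BigOperators

noncomputable section

/-- Frobenius norm of a real matrix. -/
def fnorm {ι κ : Type*} [Fintype ι] [Fintype κ] (A : Matrix ι κ ℝ) : ℝ :=
  Real.sqrt (∑ i, ∑ j, ‖A i j‖ ^ 2)

/-- The four Moore–Penrose conditions for real matrices. -/
def IsMoorePenrose {ι κ : Type*} [Fintype ι] [Fintype κ]
    (A : Matrix ι κ ℝ) (B : Matrix κ ι ℝ) : Prop :=
  A * B * A = A ∧ B * A * B = B ∧ (A * B)ᵀ = A * B ∧ (B * A)ᵀ = B * A

open scoped Classical in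
/-- The Moore–Penrose pseudoinverse (defined by choice; it always exists and is unique). -/
noncomputable def pinv {ι κ : Type*} [Fintype ι] [Fintype κ] (A : Matrix ι κ ℝ) :
    Matrix κ ι ℝ :=
  if h : ∃ B, IsMoorePenrose A B then h.choose else 0

theorem exists_mp {n : ℕ} {ι : Type} [Fintype ι] (A : Matrix ι (Fin n) ℝ) :
    ∃ B, IsMoorePenrose A B := by
  have hG : (Aᵀ * A).IsHermitian := by
    simpa using Matrix.isHermitian_conjTranspose_mul_self A
  obtain ⟨U, d, hU, hGd⟩ : ∃ (U : Matrix (Fin n) (Fin n) ℝ) (d : Fin n → ℝ), Uᵀ * U = 1 ∧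
      Aᵀ * A = U * diagonal d * Uᵀ := by
    refine ⟨hG.eigenvectorUnitary, hG.eigenvalues, ?_, ?_⟩
    · have := Unitary.coe_star_mul_self hG.eigenvectorUnitary
      simpa [Matrix.star_eq_conjTranspose] using this
    · have := hG.spectral_theorem
      simpa [Unitary.conjStarAlgAut_apply, Matrix.star_eq_conjTranspose, Function.comp_def]
        using this
  set P := U * diagonal (fun i => (d i)⁻¹) * Uᵀ with hP
  have hPt : Pᵀ = P := by
    simp [hP, Matrix.transpose_mul, Matrix.mul_assoc]
  have key : ∀ a b : Fin n → ℝ, (U * diagonal a * Uᵀ) * (U * diagonal b * Uᵀ)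
      = U * diagonal (fun i => a i * b i) * Uᵀ := by
    intro a b
    calc _ = U * diagonal a * (Uᵀ * U) * diagonal b * Uᵀ := by simp only [Matrix.mul_assoc]
      _ = _ := by rw [hU, Matrix.mul_one, Matrix.mul_assoc U, diagonal_mul_diagonal]
  have hPG : P * (Aᵀ * A) = U * diagonal (fun i => (d i)⁻¹ * d i) * Uᵀ := by
    rw [hGd, hP, key]
  have hPGt : (P * (Aᵀ * A))ᵀ = P * (Aᵀ * A) := by
    rw [hPG]; simp [Matrix.transpose_mul, Matrix.mul_assoc]
  have hPGP : P * (Aᵀ * A) * P = P := by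
    rw [hPG, hP, key]
    congr 3; funext i
    by_cases h : d i = 0 <;> simp [h]
  have hGPG : (Aᵀ * A) * (P * (Aᵀ * A)) = Aᵀ * A := by
    rw [hPG, hGd, key]
    congr 3; funext i
    by_cases h : d i = 0 <;> simp [h]
  have h0 : A - A * (P * (Aᵀ * A)) = 0 := by
    have : (A - A * (P * (Aᵀ * A)))ᴴ * (A - A * (P * (Aᵀ * A))) = 0 := by
      rw [conjTranspose_eq_transpose_of_trivial, transpose_sub, transpose_mul A, hPGt,
        Matrix.sub_mul, Matrix.mul_sub, Matrix.mul_sub, ← Matrix.mul_assoc Aᵀ A, hGPG]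
      have e1 : P * (Aᵀ * A) * Aᵀ * (A * (P * (Aᵀ * A))) =
          P * (Aᵀ * A) * ((Aᵀ * A) * (P * (Aᵀ * A))) := by simp only [Matrix.mul_assoc]
      rw [e1, hGPG]
      simp only [Matrix.mul_assoc, sub_self]
    exact Matrix.conjTranspose_mul_self_eq_zero.mp this
  refine ⟨P * Aᵀ, ?_, ?_, ?_, ?_⟩
  · rw [Matrix.mul_assoc, Matrix.mul_assoc P]; exact (sub_eq_zero.mp h0).symm
  · calc _ = P * (Aᵀ * A) * P * Aᵀ := by simp only [Matrix.mul_assoc]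
      _ = _ := by rw [hPGP]
  · simp [Matrix.transpose_mul, hPt, Matrix.mul_assoc]
  · rw [Matrix.mul_assoc P]; exact hPGt

theorem mul_pinv_mul {n : ℕ} {ι : Type} [Fintype ι] (A : Matrix ι (Fin n) ℝ) :
    A * pinv A * A = A := by
  have h := exists_mp A
  unfold pinv
  rw [dif_pos h]
  exact h.choose_spec.1

/-- Symmetric backward errors (existence of the structured minimum-norm perturbation):
with real symmetric coefficients `Fⱼ`, a QR factorization `V = Q [T; 0]` (the ambient
dimension `n = p + q` is encoded as `Fin p ⊕ Fin q`), `T̃ⱼ = T fⱼ(Λ)`,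
`[B₁; B₂] = -Qᵀ R` and `[A₂₁⁽¹⁾, …, A₂₁⁽ᵏ⁾] = B₂ T̃†`, there exist symmetric matrices
`A₁₁⁽ʲ⁾` solving `∑ⱼ A₁₁⁽ʲ⁾ T̃ⱼ = B₁` (and `∑ⱼ A₂₁⁽ʲ⁾ T̃ⱼ = B₂` holds), such that the
matrices `δFⱼ = Q [[A₁₁⁽ʲ⁾, (A₂₁⁽ʲ⁾)ᵀ]; [A₂₁⁽ʲ⁾, 0]] Qᵀ` are real symmetric and satisfy
`∑ⱼ (Fⱼ + δFⱼ) V fⱼ(Λ) = 0`. -/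
theorem symmetric_backward_error_exists (p q k : ℕ)
    (F : Fin k → Matrix (Fin p ⊕ Fin q) (Fin p ⊕ Fin q) ℝ)
    (hFsym : ∀ j, (F j)ᵀ = F j)
    (f : Fin k → ℝ → ℝ) (lam : Fin p → ℝ)
    (V : Matrix (Fin p ⊕ Fin q) (Fin p) ℝ)
    (Q : Matrix (Fin p ⊕ Fin q) (Fin p ⊕ Fin q) ℝ) (hQ : Qᵀ * Q = 1)
    (T : Matrix (Fin p) (Fin p) ℝ)
    (hV : V = Q * Matrix.fromRows T 0)
    (Tt : Fin k → Matrix (Fin p) (Fin p) ℝ)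
    (hTt : ∀ j, Tt j = T * Matrix.diagonal fun i => f j (lam i))
    (Ttil : Matrix (Fin k × Fin p) (Fin p) ℝ)
    (hTtil : ∀ j s t, Ttil (j, s) t = Tt j s t)
    (R : Matrix (Fin p ⊕ Fin q) (Fin p) ℝ)
    (hR : R = ∑ j, F j * V * Matrix.diagonal fun i => f j (lam i))
    (B1 : Matrix (Fin p) (Fin p) ℝ) (hB1 : ∀ s t, B1 s t = -((Qᵀ * R) (Sum.inl s) t))
    (B2 : Matrix (Fin q) (Fin p) ℝ) (hB2 : ∀ m t, B2 m t = -((Qᵀ * R) (Sum.inr m) t))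
    (A21 : Fin k → Matrix (Fin q) (Fin p) ℝ)
    (hA21 : ∀ j m s, A21 j m s = (B2 * pinv Ttil) m (j, s)) :
    ∃ A11 : Fin k → Matrix (Fin p) (Fin p) ℝ,
      (∀ j, (A11 j)ᵀ = A11 j) ∧
      (∑ j, A11 j * Tt j) = B1 ∧
      (∑ j, A21 j * Tt j) = B2 ∧
      (∀ j, (Q * Matrix.fromBlocks (A11 j) (A21 j)ᵀ (A21 j) 0 * Qᵀ)ᵀ =
        Q * Matrix.fromBlocks (A11 j) (A21 j)ᵀ (A21 j) 0 * Qᵀ) ∧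
      (∑ j, (F j + Q * Matrix.fromBlocks (A11 j) (A21 j)ᵀ (A21 j) 0 * Qᵀ) * V *
        Matrix.diagonal fun i => f j (lam i)) = 0 := by
  have hV' : V = Q * fromRows T (0 : Matrix (Fin q) (Fin p) ℝ) := hV
  set M : Fin k → Matrix (Fin p ⊕ Fin q) (Fin p ⊕ Fin q) ℝ := fun j => Qᵀ * F j * Q with hM
  have hMs : ∀ j, (M j)ᵀ = M j := by
    intro j; simp [hM, Matrix.transpose_mul, hFsym, Matrix.mul_assoc]
  have hQ' : Q * Qᵀ = 1 := mul_eq_one_comm.mp hQ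
  have hVD : ∀ j, V * diagonal (fun i => f j (lam i)) = Q * fromRows (Tt j) (0 : Matrix (Fin q) (Fin p) ℝ) := by
    intro j
    rw [hV', hTt, Matrix.mul_assoc, fromRows_mul, Matrix.zero_mul]
  have hQR : Qᵀ * R = ∑ j, fromRows ((M j).toBlocks₁₁ * Tt j) ((M j).toBlocks₂₁ * Tt j) := by
    rw [hR, Matrix.mul_sum]
    refine Finset.sum_congr rfl fun j _ => ?_
    rw [Matrix.mul_assoc, hVD]
    have : Qᵀ * (F j * (Q * fromRows (Tt j) (0 : Matrix (Fin q) (Fin p) ℝ))) = M j * fromRows (Tt j) (0 : Matrix (Fin q) (Fin p) ℝ) := by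
      simp only [hM, Matrix.mul_assoc]
    rw [this]
    conv_lhs => rw [← fromBlocks_toBlocks (M j)]
    rw [fromBlocks_mul_fromRows]
    simp
  have h1 : ∑ j, (-(M j).toBlocks₁₁) * Tt j = B1 := by
    ext s t
    rw [hB1, hQR]
    simp [Matrix.sum_apply]
  have h2' : B2 = (Matrix.of fun m (x : Fin k × Fin p) => -(M x.1).toBlocks₂₁ m x.2) * Ttil := by
    ext s t
    rw [hB2, hQR]
    simp [Matrix.sum_apply, Matrix.mul_apply, Fintype.sum_prod_type, hTtil]
  have h2 : ∑ j, A21 j * Tt j = B2 := by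
    have e : ∑ j, A21 j * Tt j = B2 * pinv Ttil * Ttil := by
      ext s t
      rw [Matrix.mul_apply, Fintype.sum_prod_type, Matrix.sum_apply]
      simp only [Matrix.mul_apply (M := A21 _), hA21, hTtil]
    rw [e]
    conv_rhs => rw [h2', ← mul_pinv_mul Ttil]
    rw [h2']
    simp only [Matrix.mul_assoc]
  refine ⟨fun j => -(M j).toBlocks₁₁, ?_, h1, h2, ?_, ?_⟩
  · intro j
    ext a b
    have := congrFun (congrFun (hMs j) (Sum.inl a)) (Sum.inl b)
    simpa [toBlocks₁₁] using this
  · intro j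
    have hs : (-(M j).toBlocks₁₁)ᵀ = -(M j).toBlocks₁₁ := by
      ext a b
      have := congrFun (congrFun (hMs j) (Sum.inl a)) (Sum.inl b)
      simpa [toBlocks₁₁] using this
    rw [transpose_mul, transpose_mul, fromBlocks_transpose, hs]
    simp [Matrix.mul_assoc]
  · have e : ∀ j, (F j + Q * fromBlocks (-(M j).toBlocks₁₁) (A21 j)ᵀ (A21 j) 0 * Qᵀ) * V *
        diagonal (fun i => f j (lam i)) = F j * V * diagonal (fun i => f j (lam i)) +
        Q * fromRows ((-(M j).toBlocks₁₁) * Tt j) (A21 j * Tt j) := by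
      intro j
      rw [Matrix.add_mul, Matrix.add_mul]
      congr 1
      rw [Matrix.mul_assoc, hVD, Matrix.mul_assoc, Matrix.mul_assoc, ← Matrix.mul_assoc Qᵀ, hQ,
        Matrix.one_mul, fromBlocks_mul_fromRows]
      simp
    rw [Finset.sum_congr rfl fun j _ => e j, Finset.sum_add_distrib, ← hR, ← Matrix.mul_sum]
    have e2 : ∑ j, fromRows ((-(M j).toBlocks₁₁) * Tt j) (A21 j * Tt j) = -(Qᵀ * R) := by
      ext (a | a) t
      · rw [Matrix.neg_apply, ← hB1, ← h1]; simp only [Matrix.sum_apply, fromRows_apply_inl]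
      · rw [Matrix.neg_apply, ← hB2, ← h2]; simp only [Matrix.sum_apply, fromRows_apply_inr]
    rw [e2, Matrix.mul_neg, ← Matrix.mul_assoc, hQ', Matrix.one_mul, add_neg_cancel]
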